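/- Let F ∈ GL(n,k) with n ≥ 2, and let q ∈ k* satisfy q² + tr(F·ᵀF⁻¹)·q + 1 = 0. Then B(E_q,F) is a B(E_q)-B(F)-bigalois extension: B(E_q,F) ≠ 0; the unique algebra homomorphism α : B(E_q,F) → B(E_q) ⊗ B(E_q,F) with α(z_{ij}) = Σ_{k=1}^2 a_{ik} ⊗ z_{kj} yields a bijective Galois map κ_l = (id ⊗ m) ∘ (α ⊗ id) : B(E_q,F) ⊗ B(E_q,F) → B(E_q) ⊗ B(E_q,F); and the unique algebra homomorphism β : B(E_q,F) → B(E_q,F) ⊗ B(F) with β(z_{ij}) = Σ_{k=1}^n z_{ik} ⊗ b_{kj} yields a bijective Galois map κ_r = (m ⊗ id) ∘ (id ⊗ β) : B(E_q,F) ⊗ B(E_q,F) → B(E_q,F) ⊗ B(F), where m is the multiplication of B(E_q,F). -/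

import Mathlib

open scoped TensorProduct
open Matrix

noncomputable section

variable (k : Type) [Field k]

/-- The matrix of free generators of the free algebra on `Fin m × Fin n`. -/
def gens (m n : ℕ) : Matrix (Fin m) (Fin n) (FreeAlgebra k (Fin m × Fin n)) :=
  Matrix.of fun i j => FreeAlgebra.ι k (i, j)

/-- A scalar matrix viewed as a matrix over a `k`-algebra. -/
def liftMat {A : Type} [Semiring A] [Algebra k A] {p q : ℕ}
    (M : Matrix (Fin p) (Fin q) k) : Matrix (Fin p) (Fin q) A :=
  M.map (algebraMap k A)

/-- The defining relations of the algebra `B(E,F)`: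
`F⁻¹ * ᵀz * E * z = 1` and `z * F⁻¹ * ᵀz * E = 1`. -/
inductive BRel {m n : ℕ} (E : Matrix (Fin m) (Fin m) k) (F : Matrix (Fin n) (Fin n) k) :
    FreeAlgebra k (Fin m × Fin n) → FreeAlgebra k (Fin m × Fin n) → Prop
  | left (i j : Fin n) : BRel E F
      ((liftMat k (A := FreeAlgebra k (Fin m × Fin n)) F⁻¹ * (gens k m n)ᵀ *
          liftMat k (A := FreeAlgebra k (Fin m × Fin n)) E * gens k m n :
          Matrix (Fin n) (Fin n) (FreeAlgebra k (Fin m × Fin n))) i j)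
      ((1 : Matrix (Fin n) (Fin n) (FreeAlgebra k (Fin m × Fin n))) i j)
  | right (i j : Fin m) : BRel E F
      ((gens k m n * liftMat k (A := FreeAlgebra k (Fin m × Fin n)) F⁻¹ * (gens k m n)ᵀ *
          liftMat k (A := FreeAlgebra k (Fin m × Fin n)) E :
          Matrix (Fin m) (Fin m) (FreeAlgebra k (Fin m × Fin n))) i j)
      ((1 : Matrix (Fin m) (Fin m) (FreeAlgebra k (Fin m × Fin n))) i j)

/-- The algebra `B(E,F)`.  The Hopf algebra `B(E)` is `BB k E E`. -/
abbrev BB {m n : ℕ} (E : Matrix (Fin m) (Fin m) k) (F : Matrix (Fin n) (Fin n) k) :=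
  RingQuot (BRel k E F)

/-- The matrix of generators of `B(E,F)`. -/
def ZMat {m n : ℕ} (E : Matrix (Fin m) (Fin m) k) (F : Matrix (Fin n) (Fin n) k) :
    Matrix (Fin m) (Fin n) (BB k E F) :=
  Matrix.of fun i j => RingQuot.mkAlgHom k (BRel k E F) (gens k m n i j)
/-- The matrix `E_q` with rows `(0, 1)` and `(−q⁻¹, 0)`, so that `B(E_q) = O(SL_q(2))`. -/
def Eqm (q : k) : Matrix (Fin 2) (Fin 2) k := !![0, 1; -q⁻¹, 0]

section general
variable {k}

local notation "ℓ[" XX "]" => liftMat _ (A := XX)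

lemma liftMat_mul {A : Type} [Ring A] [Algebra k A] {p q r : ℕ}
    (M : Matrix (Fin p) (Fin q) k) (N : Matrix (Fin q) (Fin r) k) :
    (ℓ[A] (M * N) : Matrix _ _ A) = ℓ[A] M * ℓ[A] N := by
  exact Matrix.map_mul

lemma liftMat_one {A : Type} [Ring A] [Algebra k A] {p : ℕ} :
    (ℓ[A] (1 : Matrix (Fin p) (Fin p) k) : Matrix _ _ A) = 1 := by
  simp [liftMat]

lemma liftMat_transpose {A : Type} [Ring A] [Algebra k A] {p q : ℕ}
    (M : Matrix (Fin p) (Fin q) k) :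
    (ℓ[A] M : Matrix _ _ A)ᵀ = ℓ[A] Mᵀ := rfl

lemma liftMat_map {A B : Type} [Ring A] [Algebra k A] [Ring B] [Algebra k B] {p q : ℕ}
    (M : Matrix (Fin p) (Fin q) k) (f : A →ₐ[k] B) :
    (ℓ[A] M : Matrix _ _ A).map f = ℓ[B] M := by
  ext i j; simp [liftMat]

lemma transpose_mul_comm' {A : Type} [Ring A] {p q r : ℕ}
    (X : Matrix (Fin p) (Fin q) A) (Y : Matrix (Fin q) (Fin r) A)
    (h : ∀ i l j, X i l * Y l j = Y l j * X i l) : (X * Y)ᵀ = Yᵀ * Xᵀ := by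
  ext i j
  simp only [Matrix.transpose_apply, Matrix.mul_apply]
  exact Finset.sum_congr rfl fun l _ => h _ _ _

lemma transpose_lift_mul {A : Type} [Ring A] [Algebra k A] {p q r : ℕ}
    (M : Matrix (Fin p) (Fin q) k) (Y : Matrix (Fin q) (Fin r) A) :
    (ℓ[A] M * Y)ᵀ = Yᵀ * ℓ[A] Mᵀ := by
  rw [← liftMat_transpose]
  exact transpose_mul_comm' _ _ fun i l j => Algebra.commutes _ _

lemma transpose_mul_lift {A : Type} [Ring A] [Algebra k A] {p q r : ℕ}
    (Y : Matrix (Fin p) (Fin q) A) (M : Matrix (Fin q) (Fin r) k) :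
    (Y * ℓ[A] M)ᵀ = ℓ[A] Mᵀ * Yᵀ := by
  rw [← liftMat_transpose]
  exact transpose_mul_comm' _ _ fun i l j => (Algebra.commutes _ _).symm

variable {m n p : ℕ} {E : Matrix (Fin m) (Fin m) k} {F : Matrix (Fin n) (Fin n) k}
  {G : Matrix (Fin p) (Fin p) k}

lemma liftF_inv {A : Type} [Ring A] [Algebra k A] (hF : IsUnit F.det) :
    (ℓ[A] F : Matrix _ _ A) * ℓ[A] F⁻¹ = 1 := by
  rw [← liftMat_mul, Matrix.mul_nonsing_inv _ hF, liftMat_one]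

lemma lift_invF {A : Type} [Ring A] [Algebra k A] (hF : IsUnit F.det) :
    (ℓ[A] F⁻¹ : Matrix _ _ A) * ℓ[A] F = 1 := by
  rw [← liftMat_mul, Matrix.nonsing_inv_mul _ hF, liftMat_one]

lemma gens_map {A : Type} [Ring A] [Algebra k A] (X : Matrix (Fin m) (Fin n) A) :
    (gens k m n).map (FreeAlgebra.lift k fun ij : Fin m × Fin n => X ij.1 ij.2) = X := by
  ext i j; simp [gens]

lemma map_rel_left {A B : Type} [Ring A] [Algebra k A] [Ring B] [Algebra k B] (f : A →ₐ[k] B)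
    (X : Matrix (Fin m) (Fin n) A) :
    (ℓ[A] F⁻¹ * Xᵀ * ℓ[A] E * X : Matrix _ _ A).map f =
      ℓ[B] F⁻¹ * (X.map f)ᵀ * ℓ[B] E * X.map f := by
  rw [Matrix.map_mul, Matrix.map_mul, Matrix.map_mul, liftMat_map, liftMat_map]; rfl

lemma map_rel_right {A B : Type} [Ring A] [Algebra k A] [Ring B] [Algebra k B] (f : A →ₐ[k] B)
    (X : Matrix (Fin m) (Fin n) A) :
    (X * ℓ[A] F⁻¹ * Xᵀ * ℓ[A] E : Matrix _ _ A).map f =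
      X.map f * ℓ[B] F⁻¹ * (X.map f)ᵀ * ℓ[B] E := by
  rw [Matrix.map_mul, Matrix.map_mul, Matrix.map_mul, liftMat_map, liftMat_map]; rfl

lemma BB_lift {A : Type} [Ring A] [Algebra k A] (X : Matrix (Fin m) (Fin n) A)
    (h1 : ℓ[A] F⁻¹ * Xᵀ * ℓ[A] E * X = 1)
    (h2 : X * ℓ[A] F⁻¹ * Xᵀ * ℓ[A] E = 1) :
    ∃ f : BB k E F →ₐ[k] A, ∀ i j, f (ZMat k E F i j) = X i j := by
  set φ := FreeAlgebra.lift k fun ij : Fin m × Fin n => X ij.1 ij.2 with hφ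
  refine ⟨RingQuot.liftAlgHom k ⟨φ, ?_⟩, ?_⟩
  · intro x y h
    induction h with
    | left i j =>
      have := map_rel_left (E := E) (F := F) φ (gens k m n)
      rw [gens_map, h1] at this
      have := congrFun (congrFun this i) j
      rw [Matrix.map_apply] at this
      rw [this]
      by_cases hij : i = j <;> simp [Matrix.one_apply, hij]
    | right i j =>
      have := map_rel_right (E := E) (F := F) φ (gens k m n)
      rw [gens_map, h2] at this
      have := congrFun (congrFun this i) j
      rw [Matrix.map_apply] at this
      rw [this]
      by_cases hij : i = j <;> simp [Matrix.one_apply, hij]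
  · intro i j
    simp [ZMat, gens, hφ]

lemma Z_left : ℓ[BB k E F] F⁻¹ * (ZMat k E F)ᵀ * ℓ[BB k E F] E * ZMat k E F = 1 := by
  have h := map_rel_left (E := E) (F := F) (RingQuot.mkAlgHom k (BRel k E F)) (gens k m n)
  have e : (gens k m n).map (RingQuot.mkAlgHom k (BRel k E F)) = ZMat k E F := rfl
  rw [e] at h
  rw [← h]
  ext i j
  rw [Matrix.map_apply, RingQuot.mkAlgHom_rel k (BRel.left i j)]
  by_cases hij : i = j <;> simp [Matrix.one_apply, hij]

lemma Z_right : ZMat k E F * ℓ[BB k E F] F⁻¹ * (ZMat k E F)ᵀ * ℓ[BB k E F] E = 1 := by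
  have h := map_rel_right (E := E) (F := F) (RingQuot.mkAlgHom k (BRel k E F)) (gens k m n)
  have e : (gens k m n).map (RingQuot.mkAlgHom k (BRel k E F)) = ZMat k E F := rfl
  rw [e] at h
  rw [← h]
  ext i j
  rw [Matrix.map_apply, RingQuot.mkAlgHom_rel k (BRel.right i j)]
  by_cases hij : i = j <;> simp [Matrix.one_apply, hij]

lemma BB_induction (P : BB k E F → Prop) (hs : ∀ r : k, P (algebraMap k _ r))
    (hg : ∀ i j, P (ZMat k E F i j)) (ha : ∀ x y, P x → P y → P (x + y))
    (hm : ∀ x y, P x → P y → P (x * y)) (x : BB k E F) : P x := by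
  obtain ⟨a, rfl⟩ := RingQuot.mkAlgHom_surjective k (BRel k E F) x
  induction a using FreeAlgebra.induction with
  | grade0 r => rw [AlgHom.commutes]; exact hs r
  | grade1 ij => exact hg ij.1 ij.2
  | mul a b h1 h2 => rw [map_mul]; exact hm _ _ h1 h2
  | add a b h1 h2 => rw [map_add]; exact ha _ _ h1 h2

lemma BB_ext {A : Type} [Ring A] [Algebra k A] (f g : BB k E F →ₐ[k] A)
    (h : ∀ i j, f (ZMat k E F i j) = g (ZMat k E F i j)) : f = g := by
  refine AlgHom.ext fun x => ?_
  induction x using BB_induction with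
  | hs r => simp
  | hg i j => exact h i j
  | ha x y hx hy => rw [map_add, map_add, hx, hy]
  | hm x y hx hy => rw [map_mul, map_mul, hx, hy]

/-- A matrix satisfying the two relations, from the two bilinear forms. -/
lemma rel_forms {A : Type} [Ring A] [Algebra k A] (hF : IsUnit F.det)
    (X : Matrix (Fin m) (Fin n) A) (h1 : ℓ[A] F⁻¹ * Xᵀ * ℓ[A] E * X = 1) :
    Xᵀ * ℓ[A] E * X = ℓ[A] F := by
  calc Xᵀ * ℓ[A] E * X = (ℓ[A] F * ℓ[A] F⁻¹) * (Xᵀ * ℓ[A] E * X) := by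
        rw [liftF_inv hF, Matrix.one_mul]
    _ = ℓ[A] F * (ℓ[A] F⁻¹ * Xᵀ * ℓ[A] E * X) := by
        simp only [Matrix.mul_assoc]
    _ = ℓ[A] F := by rw [h1, Matrix.mul_one]

lemma rel_forms2 {A : Type} [Ring A] [Algebra k A] (hE : IsUnit E.det)
    (X : Matrix (Fin m) (Fin n) A) (h2 : X * ℓ[A] F⁻¹ * Xᵀ * ℓ[A] E = 1) :
    X * ℓ[A] F⁻¹ * Xᵀ = ℓ[A] E⁻¹ := by
  calc X * ℓ[A] F⁻¹ * Xᵀ = (X * ℓ[A] F⁻¹ * Xᵀ) * (ℓ[A] E * ℓ[A] E⁻¹) := by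
        rw [liftF_inv hE, Matrix.mul_one]
    _ = (X * ℓ[A] F⁻¹ * Xᵀ * ℓ[A] E) * ℓ[A] E⁻¹ := by
        simp only [Matrix.mul_assoc]
    _ = _ := by rw [h2, Matrix.one_mul]

lemma prod_rel {A : Type} [Ring A] [Algebra k A] (hE : IsUnit E.det) (hF : IsUnit F.det)
    (hG : IsUnit G.det)
    (X : Matrix (Fin m) (Fin n) A) (Y : Matrix (Fin n) (Fin p) A)
    (hc : ∀ i j r s, X i j * Y r s = Y r s * X i j)
    (h1 : ℓ[A] F⁻¹ * Xᵀ * ℓ[A] E * X = 1)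
    (h2 : X * ℓ[A] F⁻¹ * Xᵀ * ℓ[A] E = 1)
    (h3 : ℓ[A] G⁻¹ * Yᵀ * ℓ[A] F * Y = 1)
    (h4 : Y * ℓ[A] G⁻¹ * Yᵀ * ℓ[A] F = 1) :
    ℓ[A] G⁻¹ * (X * Y)ᵀ * ℓ[A] E * (X * Y) = 1 ∧
    (X * Y) * ℓ[A] G⁻¹ * (X * Y)ᵀ * ℓ[A] E = 1 := by
  rw [transpose_mul_comm' X Y (fun _ _ _ => hc _ _ _ _)]
  constructor
  · calc _ = ℓ[A] G⁻¹ * Yᵀ * (Xᵀ * ℓ[A] E * X) * Y := by simp only [Matrix.mul_assoc]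
      _ = 1 := by rw [rel_forms hF X h1, h3]
  · calc _ = X * (Y * ℓ[A] G⁻¹ * Yᵀ) * Xᵀ * ℓ[A] E := by simp only [Matrix.mul_assoc]
      _ = 1 := by rw [rel_forms2 hF Y h4, h2]

lemma map_rels {A : Type} [Ring A] [Algebra k A] (f : BB k E F →ₐ[k] A) :
    (ℓ[A] F⁻¹ * ((ZMat k E F).map f)ᵀ * ℓ[A] E * (ZMat k E F).map f = 1) ∧
    ((ZMat k E F).map f * ℓ[A] F⁻¹ * ((ZMat k E F).map f)ᵀ * ℓ[A] E = 1) := by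
  rw [← map_rel_left, ← map_rel_right, Z_left, Z_right]
  constructor <;> (ext i j; by_cases hij : i = j <;> simp [Matrix.one_apply, hij])

/-- Pairing two commuting homs. -/
lemma exists_conv {A B : Type} [Ring A] [Algebra k A] [Ring B] [Algebra k B]
    (hE : IsUnit E.det) (hF : IsUnit F.det) (hG : IsUnit G.det)
    (f : BB k E F →ₐ[k] A) (g : BB k F G →ₐ[k] B) :
    ∃ h : BB k E G →ₐ[k] A ⊗[k] B, ∀ i j, h (ZMat k E G i j) =
      ∑ l, f (ZMat k E F i l) ⊗ₜ[k] g (ZMat k F G l j) := by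
  obtain ⟨a1, a2⟩ := map_rels ((Algebra.TensorProduct.includeLeft : A →ₐ[k] A ⊗[k] B).comp f)
  obtain ⟨b1, b2⟩ := map_rels ((Algebra.TensorProduct.includeRight : B →ₐ[k] A ⊗[k] B).comp g)
  obtain ⟨c1, c2⟩ := prod_rel hE hF hG _ _ (by intros; simp) a1 a2 b1 b2
  obtain ⟨h, hh⟩ := BB_lift _ c1 c2
  refine ⟨h, fun i j => ?_⟩
  rw [hh, Matrix.mul_apply]
  simp

/-- The inverse of the generating matrix. -/
def VMat (E : Matrix (Fin m) (Fin m) k) (F : Matrix (Fin n) (Fin n) k) :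
    Matrix (Fin n) (Fin m) (BB k E F) :=
  ℓ[BB k E F] F⁻¹ * (ZMat k E F)ᵀ * ℓ[BB k E F] E

lemma V_Z : VMat E F * ZMat k E F = 1 := Z_left
lemma Z_V : ZMat k E F * VMat E F = 1 := by
  rw [← Z_right, VMat]; simp only [Matrix.mul_assoc]

lemma V_Z_apply (i j) : ∑ l, VMat E F i l * ZMat k E F l j = if i = j then 1 else 0 := by
  rw [← Matrix.mul_apply, V_Z, Matrix.one_apply]
lemma Z_V_apply (i j) : ∑ l, ZMat k E F i l * VMat E F l j = if i = j then 1 else 0 := by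
  rw [← Matrix.mul_apply, Z_V, Matrix.one_apply]

lemma mop_mul {A : Type} [Ring A] {p q r : ℕ} (X : Matrix (Fin p) (Fin q) A)
    (Y : Matrix (Fin q) (Fin r) A) :
    X.map MulOpposite.op * Y.map MulOpposite.op = ((Yᵀ * Xᵀ)ᵀ).map MulOpposite.op := by
  ext i j
  simp [Matrix.mul_apply]

lemma mop_lift {A : Type} [Ring A] [Algebra k A] {p q : ℕ} (M : Matrix (Fin p) (Fin q) k) :
    ℓ[Aᵐᵒᵖ] M = (ℓ[A] M : Matrix _ _ A).map MulOpposite.op := rfl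

lemma mop_tr {A : Type} [Ring A] {p q : ℕ} (X : Matrix (Fin p) (Fin q) A) :
    (X.map MulOpposite.op)ᵀ = Xᵀ.map MulOpposite.op := rfl

lemma exists_anti (hE : IsUnit E.det) (hF : IsUnit F.det) :
    ∃ S : BB k F E →ₐ[k] (BB k E F)ᵐᵒᵖ, ∀ i j, S (ZMat k F E i j) = MulOpposite.op (VMat E F i j) := by
  have hVt : (VMat E F)ᵀ = ℓ[BB k E F] Eᵀ * (ZMat k E F) * ℓ[BB k E F] F⁻¹ᵀ := by
    rw [VMat, transpose_mul_lift, transpose_lift_mul, Matrix.transpose_transpose, Matrix.mul_assoc]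
  have hFt : (ℓ[BB k E F] F⁻¹ᵀ : Matrix _ _ (BB k E F)) * ℓ[BB k E F] Fᵀ = 1 := by
    rw [← liftMat_mul, ← Matrix.transpose_mul, Matrix.mul_nonsing_inv _ hF, Matrix.transpose_one,
      liftMat_one]
  have hFt' : (ℓ[BB k E F] Fᵀ : Matrix _ _ (BB k E F)) * ℓ[BB k E F] F⁻¹ᵀ = 1 := by
    rw [← liftMat_mul, ← Matrix.transpose_mul, Matrix.nonsing_inv_mul _ hF, Matrix.transpose_one,
      liftMat_one]
  have hEt : (ℓ[BB k E F] E⁻¹ᵀ : Matrix _ _ (BB k E F)) * ℓ[BB k E F] Eᵀ = 1 := by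
    rw [← liftMat_mul, ← Matrix.transpose_mul, Matrix.mul_nonsing_inv _ hE, Matrix.transpose_one,
      liftMat_one]
  have hEt' : (ℓ[BB k E F] Eᵀ : Matrix _ _ (BB k E F)) * ℓ[BB k E F] E⁻¹ᵀ = 1 := by
    rw [← liftMat_mul, ← Matrix.transpose_mul, Matrix.nonsing_inv_mul _ hE, Matrix.transpose_one,
      liftMat_one]
  have hop : ∀ r : ℕ, ((1 : Matrix (Fin r) (Fin r) (BB k E F)).map MulOpposite.op) = 1 := by
    intro r; ext i j; by_cases hij : i = j <;> simp [Matrix.one_apply, hij]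
  refine BB_lift ((VMat E F).map MulOpposite.op) ?_ ?_
  · rw [mop_lift, mop_lift, mop_tr, mop_mul, mop_mul, mop_mul]
    simp only [Matrix.transpose_transpose, liftMat_transpose]
    have : (VMat E F)ᵀ * (ℓ[BB k E F] Fᵀ * (VMat E F * ℓ[BB k E F] E⁻¹ᵀ)) = 1 := by
      calc _ = ℓ[BB k E F] Eᵀ * (ZMat k E F) * (ℓ[BB k E F] F⁻¹ᵀ * ℓ[BB k E F] Fᵀ) * VMat E F
            * ℓ[BB k E F] E⁻¹ᵀ := by rw [hVt]; simp only [Matrix.mul_assoc]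
        _ = ℓ[BB k E F] Eᵀ * (ZMat k E F * VMat E F) * ℓ[BB k E F] E⁻¹ᵀ := by
            rw [hFt]; simp only [Matrix.mul_assoc, Matrix.mul_one, Matrix.one_mul]
        _ = 1 := by rw [Z_V, Matrix.mul_one, hEt']
    rw [this, Matrix.transpose_one, hop]
  · rw [mop_lift, mop_lift, mop_tr, mop_mul, mop_mul, mop_mul]
    simp only [Matrix.transpose_transpose, liftMat_transpose]
    have : ℓ[BB k E F] Fᵀ * (VMat E F * (ℓ[BB k E F] E⁻¹ᵀ * (VMat E F)ᵀ)) = 1 := by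
      calc _ = ℓ[BB k E F] Fᵀ * VMat E F * (ℓ[BB k E F] E⁻¹ᵀ * ℓ[BB k E F] Eᵀ) * ZMat k E F
            * ℓ[BB k E F] F⁻¹ᵀ := by rw [hVt]; simp only [Matrix.mul_assoc]
        _ = ℓ[BB k E F] Fᵀ * (VMat E F * ZMat k E F) * ℓ[BB k E F] F⁻¹ᵀ := by
            rw [hEt]; simp only [Matrix.mul_assoc, Matrix.mul_one, Matrix.one_mul]
        _ = 1 := by rw [V_Z, Matrix.mul_one, hFt']
    rw [this, Matrix.transpose_one, hop]

end general

section galois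
variable {k}
open MulOpposite

lemma op_fsum {ι A : Type} [AddCommMonoid A] (s : Finset ι) (f : ι → A) :
    ∑ i ∈ s, op (f i) = op (∑ i ∈ s, f i) :=
  (map_sum (opAddEquiv : A ≃+ Aᵐᵒᵖ) f s).symm

lemma galois_left_abs {B Z : Type} [Ring B] [Algebra k B] [Ring Z] [Algebra k Z] {m n : ℕ}
    (a0 : Matrix (Fin m) (Fin m) B) (z : Matrix (Fin m) (Fin n) Z) (v : Matrix (Fin n) (Fin m) Z)
    (indB : ∀ P : B → Prop, (∀ r : k, P (algebraMap k _ r)) → (∀ i j, P (a0 i j)) →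
      (∀ x y, P x → P y → P (x + y)) → (∀ x y, P x → P y → P (x * y)) → ∀ x, P x)
    (indZ : ∀ P : Z → Prop, (∀ r : k, P (algebraMap k _ r)) → (∀ i j, P (z i j)) →
      (∀ x y, P x → P y → P (x + y)) → (∀ x y, P x → P y → P (x * y)) → ∀ x, P x)
    (V_Z_apply : ∀ i j, ∑ l, v i l * z l j = if i = j then 1 else 0)
    (Z_V_apply : ∀ i j, ∑ l, z i l * v l j = if i = j then 1 else 0)
    (α : Z →ₐ[k] (B ⊗[k] Z)) (hα : ∀ i j, α (z i j) = ∑ l, a0 i l ⊗ₜ[k] z l j)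
    (γ : B →ₐ[k] (Z ⊗[k] Zᵐᵒᵖ)) (hγ : ∀ i j, γ (a0 i j) = ∑ l, z i l ⊗ₜ[k] op (v l j)) :
    Function.Bijective
        ((LinearMap.lTensor (B) (LinearMap.mul' k Z)) ∘ₗ
          (TensorProduct.assoc k (B) Z Z).toLinearMap ∘ₗ
          (LinearMap.rTensor Z α.toLinearMap) :
          (Z ⊗[k] Z) →ₗ[k] (B ⊗[k] Z)) := by
  set κ : (Z ⊗[k] Z) →ₗ[k] (B ⊗[k] Z) := 
    ((LinearMap.lTensor (B) (LinearMap.mul' k Z)) ∘ₗ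
          (TensorProduct.assoc k (B) Z Z).toLinearMap ∘ₗ
          (LinearMap.rTensor Z α.toLinearMap)) with hκ
  have hκ' : ∀ x y, κ (x ⊗ₜ y) = α x * (1 ⊗ₜ y) := by
    intro x y
    simp only [hκ, LinearMap.comp_apply, LinearMap.rTensor_tmul, AlgHom.toLinearMap_apply,
      LinearEquiv.coe_coe]
    generalize α x = t
    induction t using TensorProduct.induction_on with
    | zero => simp
    | tmul a b => simp
    | add a b ha hb => rw [TensorProduct.add_tmul, map_add, map_add, ha, hb, add_mul]
  clear_value κ
  let κi : (B ⊗[k] Z) →ₗ[k] (Z ⊗[k] Zᵐᵒᵖ) :=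
    TensorProduct.lift (LinearMap.mk₂ k (fun a w => ((1 : Z) ⊗ₜ[k] op w) * γ a)
      (by intros; simp [mul_add])
      (by intro c a w; rw [map_smul]; exact mul_smul_comm c _ _)
      (by intros; simp [TensorProduct.tmul_add, add_mul])
      (by intro c a w; rw [op_smul, TensorProduct.tmul_smul]; exact smul_mul_assoc c _ _))
  have hκi : ∀ a w, κi (a ⊗ₜ w) = ((1 : Z) ⊗ₜ[k] op w) * γ a := by intros; simp [κi]
  clear_value κi
  let e : (Z ⊗[k] Z) ≃ₗ[k] (Z ⊗[k] Zᵐᵒᵖ) :=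
    TensorProduct.congr (LinearEquiv.refl k _) (opLinearEquiv k)
  let κt := κ ∘ₗ e.symm.toLinearMap
  have hκt : ∀ x y, κt (x ⊗ₜ op y) = α x * (1 ⊗ₜ y) := by
    intro x y
    rw [← hκ']
    simp [κt, e]
  have Q : ∀ x ξ, κi (α x * ξ) = (x ⊗ₜ 1) * κi ξ := by
    intro x
    refine indZ (fun x => ∀ ξ, κi (α x * ξ) = (x ⊗ₜ 1) * κi ξ) ?_ ?_ ?_ ?_ x
    · intro r ξ
      rw [AlgHom.commutes, ← Algebra.smul_def, map_smul]; exact Algebra.smul_def r (κi ξ)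
    · intro i j ξ
      induction ξ using TensorProduct.induction_on with
      | zero => simp
      | add a b ha hb => rw [mul_add, map_add, ha, hb, map_add, mul_add]
      | tmul a w =>
        rw [hα, Finset.sum_mul, map_sum]
        simp only [Algebra.TensorProduct.tmul_mul_tmul, hκi, map_mul, hγ]
        rw [← mul_assoc, Algebra.TensorProduct.tmul_mul_tmul, one_mul, mul_one]
        simp only [← mul_assoc]
        rw [← Finset.sum_mul]
        congr 1
        simp only [Finset.mul_sum, Algebra.TensorProduct.tmul_mul_tmul, one_mul, ← op_mul,
          ← mul_assoc]
        rw [Finset.sum_comm]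
        simp only [← TensorProduct.tmul_sum, op_fsum, ← Finset.sum_mul, V_Z_apply]
        simp [ite_mul, TensorProduct.tmul_ite, apply_ite op]
    · intro x y hx hy ξ; rw [map_add α, add_mul, map_add, hx, hy, TensorProduct.add_tmul, add_mul]
    · intro x y hx hy ξ; rw [map_mul α, mul_assoc, hx, hy, ← mul_assoc, Algebra.TensorProduct.tmul_mul_tmul,
        mul_one]
  have Q' : ∀ a η, κt (η * γ a) = κt η * (a ⊗ₜ 1) := by
    intro a
    refine indB (fun a => ∀ η, κt (η * γ a) = κt η * (a ⊗ₜ 1)) ?_ ?_ ?_ ?_ a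
    · intro r ξ
      rw [AlgHom.commutes, ← Algebra.commutes, ← Algebra.smul_def, map_smul]; exact (Algebra.smul_def r _).trans (Algebra.commutes r _)
    · intro i j η
      induction η using TensorProduct.induction_on with
      | zero => simp
      | add a b ha hb => rw [add_mul, map_add, ha, hb, map_add, add_mul]
      | tmul s t =>
        induction t using MulOpposite.rec' with
        | h t =>
        rw [hγ, Finset.mul_sum, map_sum]
        simp only [Algebra.TensorProduct.tmul_mul_tmul, ← op_mul, hκt, map_mul, hα]
        simp only [mul_assoc, Finset.sum_mul, Algebra.TensorProduct.tmul_mul_tmul, one_mul, mul_one]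
        simp only [← Finset.mul_sum]
        congr 1
        rw [Finset.sum_comm]
        simp only [← TensorProduct.tmul_sum, ← mul_assoc, ← Finset.sum_mul, Z_V_apply]
        simp [ite_mul, TensorProduct.tmul_ite]
    · intro x y hx hy ξ; rw [map_add γ, mul_add, map_add, hx, hy, TensorProduct.add_tmul, mul_add]
    · intro x y hx hy ξ; rw [map_mul γ, ← mul_assoc, hy, hx, mul_assoc, Algebra.TensorProduct.tmul_mul_tmul,
        mul_one]
  have h1 : κi ∘ₗ κt = LinearMap.id := by
    apply TensorProduct.ext'
    intro x y
    induction y using MulOpposite.rec' with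
    | h y =>
    rw [LinearMap.comp_apply, hκt, Q, hκi]
    simp
  have h2 : κt ∘ₗ κi = LinearMap.id := by
    apply TensorProduct.ext'
    intro a w
    rw [LinearMap.comp_apply, hκi, Q', hκt]
    simp
  have hb : Function.Bijective κt :=
    Function.bijective_iff_has_inverse.mpr ⟨κi, fun x => LinearMap.congr_fun h1 x,
      fun x => LinearMap.congr_fun h2 x⟩
  have : (κ : _ → _) = κt ∘ e := by
    funext x; simp [κt]
  rw [this]
  exact hb.comp e.bijective

lemma galois_right_abs {B Z : Type} [Ring B] [Algebra k B] [Ring Z] [Algebra k Z] {m n : ℕ}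
    (a0 : Matrix (Fin n) (Fin n) B) (z : Matrix (Fin m) (Fin n) Z) (v : Matrix (Fin n) (Fin m) Z)
    (indB : ∀ P : B → Prop, (∀ r : k, P (algebraMap k _ r)) → (∀ i j, P (a0 i j)) →
      (∀ x y, P x → P y → P (x + y)) → (∀ x y, P x → P y → P (x * y)) → ∀ x, P x)
    (indZ : ∀ P : Z → Prop, (∀ r : k, P (algebraMap k _ r)) → (∀ i j, P (z i j)) →
      (∀ x y, P x → P y → P (x + y)) → (∀ x y, P x → P y → P (x * y)) → ∀ x, P x)
    (V_Z_apply : ∀ i j, ∑ l, v i l * z l j = if i = j then 1 else 0)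
    (Z_V_apply : ∀ i j, ∑ l, z i l * v l j = if i = j then 1 else 0)
    (β : Z →ₐ[k] (Z ⊗[k] B)) (hβ : ∀ i j, β (z i j) = ∑ l, z i l ⊗ₜ[k] a0 l j)
    (γ : B →ₐ[k] (Zᵐᵒᵖ ⊗[k] Z)) (hγ : ∀ i j, γ (a0 i j) = ∑ l, op (v i l) ⊗ₜ[k] z l j) :
    Function.Bijective
        ((LinearMap.rTensor (B) (LinearMap.mul' k Z)) ∘ₗ
          (TensorProduct.assoc k Z Z (B)).symm.toLinearMap ∘ₗ
          (LinearMap.lTensor Z β.toLinearMap) :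
          (Z ⊗[k] Z) →ₗ[k] (Z ⊗[k] B)) := by
  set κ : (Z ⊗[k] Z) →ₗ[k] (Z ⊗[k] B) := 
    ((LinearMap.rTensor (B) (LinearMap.mul' k Z)) ∘ₗ
          (TensorProduct.assoc k Z Z (B)).symm.toLinearMap ∘ₗ
          (LinearMap.lTensor Z β.toLinearMap)) with hκ
  have hκ' : ∀ x y, κ (x ⊗ₜ y) = (x ⊗ₜ 1) * β y := by
    intro x y
    simp only [hκ, LinearMap.comp_apply, LinearMap.lTensor_tmul, AlgHom.toLinearMap_apply,
      LinearEquiv.coe_coe]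
    generalize β y = t
    induction t using TensorProduct.induction_on with
    | zero => simp
    | tmul a b => simp
    | add a b ha hb => rw [TensorProduct.tmul_add, map_add, map_add, ha, hb, mul_add]
  clear_value κ
  let κi : (Z ⊗[k] B) →ₗ[k] (Zᵐᵒᵖ ⊗[k] Z) :=
    TensorProduct.lift (LinearMap.mk₂ k (fun w b => γ b * (op w ⊗ₜ[k] (1 : Z)))
      (by intros; simp [TensorProduct.add_tmul, mul_add])
      (by intro c a w; rw [op_smul, ← TensorProduct.smul_tmul']; exact mul_smul_comm c _ _)
      (by intros; simp [add_mul])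
      (by intro c a w; rw [map_smul]; exact smul_mul_assoc c _ _))
  have hκi : ∀ w b, κi (w ⊗ₜ b) = γ b * (op w ⊗ₜ[k] (1 : Z)) := by intros; simp [κi]
  clear_value κi
  let e : (Z ⊗[k] Z) ≃ₗ[k] (Zᵐᵒᵖ ⊗[k] Z) :=
    TensorProduct.congr (opLinearEquiv k) (LinearEquiv.refl k _)
  let κt := κ ∘ₗ e.symm.toLinearMap
  have hκt : ∀ x y, κt (op x ⊗ₜ y) = (x ⊗ₜ 1) * β y := by
    intro x y
    rw [← hκ']
    simp [κt, e]
  have Q : ∀ y ξ, κi (ξ * β y) = κi ξ * (1 ⊗ₜ y) := by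
    intro y
    refine indZ (fun y => ∀ ξ, κi (ξ * β y) = κi ξ * (1 ⊗ₜ y)) ?_ ?_ ?_ ?_ y
    · intro r ξ
      rw [AlgHom.commutes, ← Algebra.commutes, ← Algebra.smul_def, map_smul, ← Algebra.TensorProduct.algebraMap_apply']; exact (Algebra.smul_def r (κi ξ)).trans (Algebra.commutes r (κi ξ))
    · intro i j ξ
      induction ξ using TensorProduct.induction_on with
      | zero => simp
      | add a b ha hb => rw [add_mul, map_add, ha, hb, map_add, add_mul]
      | tmul w b =>
        rw [hβ, Finset.mul_sum, map_sum]
        simp only [Algebra.TensorProduct.tmul_mul_tmul, hκi, map_mul, hγ]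
        rw [mul_assoc, Algebra.TensorProduct.tmul_mul_tmul, one_mul, mul_one]
        simp only [mul_assoc]
        rw [← Finset.mul_sum]
        congr 1
        simp only [Finset.sum_mul, Algebra.TensorProduct.tmul_mul_tmul, mul_one, ← op_mul,
          mul_assoc]
        rw [Finset.sum_comm]
        simp only [← TensorProduct.sum_tmul, op_fsum, ← Finset.mul_sum, Z_V_apply]
        simp [TensorProduct.ite_tmul, apply_ite op]
    · intro x y hx hy ξ; rw [map_add β, mul_add, map_add, hx, hy, TensorProduct.tmul_add, mul_add]
    · intro x y hx hy ξ; rw [map_mul β, ← mul_assoc, hy, hx, mul_assoc, Algebra.TensorProduct.tmul_mul_tmul,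
        mul_one]
  have Q' : ∀ b η, κt (γ b * η) = (1 ⊗ₜ b) * κt η := by
    intro b
    refine indB (fun b => ∀ η, κt (γ b * η) = (1 ⊗ₜ b) * κt η) ?_ ?_ ?_ ?_ b
    · intro r ξ
      rw [AlgHom.commutes, ← Algebra.smul_def, map_smul, ← Algebra.TensorProduct.algebraMap_apply']; exact Algebra.smul_def r _
    · intro i j η
      induction η using TensorProduct.induction_on with
      | zero => simp
      | add a b ha hb => rw [mul_add, map_add, ha, hb, map_add, mul_add]
      | tmul s t =>
        induction s using MulOpposite.rec' with
        | h s =>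
        rw [hγ, Finset.sum_mul, map_sum]
        simp only [Algebra.TensorProduct.tmul_mul_tmul, ← op_mul, hκt, map_mul, hβ]
        simp only [← mul_assoc, Finset.mul_sum, Algebra.TensorProduct.tmul_mul_tmul, one_mul, mul_one]
        simp only [← Finset.sum_mul]
        congr 1
        rw [Finset.sum_comm]
        simp only [← TensorProduct.sum_tmul, mul_assoc, ← Finset.mul_sum, V_Z_apply]
        simp [TensorProduct.ite_tmul]
    · intro x y hx hy ξ; rw [map_add γ, add_mul, map_add, hx, hy, TensorProduct.tmul_add, add_mul]
    · intro x y hx hy ξ; rw [map_mul γ, mul_assoc, hx, hy, ← mul_assoc, Algebra.TensorProduct.tmul_mul_tmul,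
        mul_one]
  have h1 : κi ∘ₗ κt = LinearMap.id := by
    apply TensorProduct.ext'
    intro x y
    induction x using MulOpposite.rec' with
    | h x =>
    rw [LinearMap.comp_apply, hκt, Q, hκi]
    simp
  have h2 : κt ∘ₗ κi = LinearMap.id := by
    apply TensorProduct.ext'
    intro a w
    rw [LinearMap.comp_apply, hκi, Q', hκt]
    simp
  have hb : Function.Bijective κt :=
    Function.bijective_iff_has_inverse.mpr ⟨κi, fun x => LinearMap.congr_fun h1 x,
      fun x => LinearMap.congr_fun h2 x⟩
  have : (κ : _ → _) = κt ∘ e := by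
    funext x; simp [κt]
  rw [this]
  exact hb.comp e.bijective

end galois

section nonzero

lemma exists_isotropic {L : Type} [Field L] [IsAlgClosed L] {n : ℕ} (hn : 2 ≤ n)
    (G : Matrix (Fin n) (Fin n) L) (hG : IsUnit G.det) :
    ∃ c e : Fin n → L, c ⬝ᵥ G *ᵥ c = 0 ∧ e ⬝ᵥ G *ᵥ c = 1 := by
  have key : ∃ c : Fin n → L, c ≠ 0 ∧ c ⬝ᵥ G *ᵥ c = 0 := by
    let i0 : Fin n := ⟨0, by omega⟩
    let i1 : Fin n := ⟨1, by omega⟩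
    have h01 : i0 ≠ i1 := by simp [i0, i1]
    by_cases h : G i0 i0 = 0
    · refine ⟨Pi.single i0 1, by simp, ?_⟩
      simp [h]
    · obtain ⟨s, hs⟩ := IsAlgClosed.exists_root
        (Polynomial.C (G i0 i0) * Polynomial.X ^ 2 +
          Polynomial.C (G i0 i1 + G i1 i0) * Polynomial.X + Polynomial.C (G i1 i1))
        (by rw [Polynomial.degree_quadratic h]; decide)
      simp [Polynomial.IsRoot] at hs
      refine ⟨Pi.single i0 s + Pi.single i1 1, ?_, ?_⟩
      · intro h0
        have := congrFun h0 i1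
        simp [h01.symm] at this
      · simp [Matrix.mulVec_add, add_dotProduct, dotProduct_add]
        linear_combination hs
  obtain ⟨c, hc, h⟩ := key
  have hne : G *ᵥ c ≠ 0 := by
    intro h0
    apply hc
    have : G⁻¹ *ᵥ (G *ᵥ c) = c := by
      rw [Matrix.mulVec_mulVec, Matrix.nonsing_inv_mul _ hG, Matrix.one_mulVec]
    rw [← this, h0, Matrix.mulVec_zero]
  obtain ⟨i, hi⟩ := Function.ne_iff.mp hne
  refine ⟨c, Pi.single i ((G *ᵥ c) i)⁻¹, h, ?_⟩
  rw [single_dotProduct]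
  exact inv_mul_cancel₀ hi

section ops
variable {L : Type} [Field L] {n : ℕ}

/-- The quadratic element. -/
def rEl (G : Matrix (Fin n) (Fin n) L) : FreeAlgebra L (Fin n) :=
  ∑ i, ∑ j, G i j • (FreeAlgebra.ι L i * FreeAlgebra.ι L j)

/-- The linear element. -/
def cEl (G : Matrix (Fin n) (Fin n) L) (c : Fin n → L) : FreeAlgebra L (Fin n) :=
  ∑ i, ∑ j, G i j • c j • FreeAlgebra.ι L i

/-- The left ideal. -/
def KId (G : Matrix (Fin n) (Fin n) L) (c : Fin n → L) (q : L) :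
    Submodule (FreeAlgebra L (Fin n)) (FreeAlgebra L (Fin n)) :=
  Submodule.span _ (Set.range (fun b => rEl G * b) ∪ {cEl G c + algebraMap L _ q})

lemma left_cases (P : Submodule L (FreeAlgebra L (Fin n))) (h1 : 1 ∈ P)
    (h : ∀ l w, FreeAlgebra.ι L l * w ∈ P) (w) : w ∈ P := by
  have : ∀ a : FreeAlgebra L (Fin n), ∀ w ∈ P, a * w ∈ P := by
    intro a
    induction a using FreeAlgebra.induction with
    | grade0 r => intro w hw; rw [← Algebra.smul_def]; exact P.smul_mem _ hw
    | grade1 x => intro w hw; exact h _ _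
    | mul a b ha hb => intro w hw; rw [mul_assoc]; exact ha _ (hb _ hw)
    | add a b ha hb => intro w hw; rw [add_mul]; exact P.add_mem (ha _ hw) (hb _ hw)
  simpa using this w 1 h1

/-- point module operators -/
def ptOp (d : ℕ → Fin n → L) (i : Fin n) : Module.End L (ℕ → L) where
  toFun s m := d m i * s (m + 1)
  map_add' s t := by funext m; simp [mul_add]
  map_smul' a s := by funext m; simp; ring

lemma one_notMem_KId (G : Matrix (Fin n) (Fin n) L) (c e : Fin n → L) (q : L)
    (hc : c ⬝ᵥ G *ᵥ c = 0) (he : e ⬝ᵥ G *ᵥ c = 1) : (1 : FreeAlgebra L (Fin n)) ∉ KId G c q := by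
  let d : ℕ → Fin n → L := fun m => Nat.rec e (fun _ d => e - (d ⬝ᵥ G *ᵥ e) • c) m
  have hd0 : d 0 = e := rfl
  have hds : ∀ m, d (m + 1) = e - (d m ⬝ᵥ G *ᵥ e) • c := fun m => rfl
  clear_value d
  have hdc : ∀ m, d m ⬝ᵥ G *ᵥ c = 1 := by
    intro m
    cases m with
    | zero => rw [hd0, he]
    | succ m => rw [hds, sub_dotProduct, smul_dotProduct, hc, he]; simp
  have hdd : ∀ m, d m ⬝ᵥ G *ᵥ d (m + 1) = 0 := by
    intro m
    rw [hds, Matrix.mulVec_sub, Matrix.mulVec_smul, dotProduct_sub, dotProduct_smul, hdc]; simp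
  let ρ := FreeAlgebra.lift L (ptOp d)
  have hρ : ∀ i s m, ρ (FreeAlgebra.ι L i) s m = d m i * s (m + 1) := by
    intro i s m; simp [ρ, ptOp]
  have hr : ρ (rEl G) = 0 := by
    ext s m
    have := hdd m
    simp only [dotProduct, Matrix.mulVec, Finset.mul_sum] at this
    simp only [rEl, map_sum, map_smul, map_mul, LinearMap.sum_apply, LinearMap.smul_apply,
      Finset.sum_apply, Pi.smul_apply, Module.End.mul_apply, hρ, smul_eq_mul, LinearMap.zero_apply,
      Pi.zero_apply]
    calc _ = (∑ i, ∑ j, d m i * (G i j * d (m + 1) j)) * s (m + 2) := by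
            simp only [Finset.sum_mul]
            refine Finset.sum_congr rfl fun i _ => Finset.sum_congr rfl fun j _ => ?_
            ring
      _ = 0 := by rw [this, zero_mul]
  let v : ℕ → L := fun m => (-q) ^ m
  have hv : ρ (cEl G c + algebraMap L _ q) v = 0 := by
    ext m
    have := hdc m
    simp only [dotProduct, Matrix.mulVec, Finset.mul_sum] at this
    simp only [cEl, map_add, AlgHom.commutes, map_sum, map_smul, map_mul, LinearMap.sum_apply,
      LinearMap.smul_apply, LinearMap.add_apply, Pi.add_apply, Module.algebraMap_end_apply,
      Finset.sum_apply, Pi.smul_apply, Module.End.mul_apply, hρ, smul_eq_mul,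
      Pi.zero_apply]
    calc _ = (∑ i, ∑ j, d m i * (G i j * c j)) * v (m + 1) + q * v m := by
            simp only [Finset.sum_mul]
            congr 1
            refine Finset.sum_congr rfl fun i _ => Finset.sum_congr rfl fun j _ => ?_
            ring
      _ = 0 := by rw [this]; simp only [v]; ring
  intro h1
  have key : ∀ κ ∈ KId G c q, ρ κ v = 0 := by
    intro κ hκ
    induction hκ using Submodule.span_induction with
    | mem x hx =>
      rcases hx with ⟨b, rfl⟩ | hx
      · simp [hr]
      · rw [Set.mem_singleton_iff.mp hx]; exact hv
    | zero => simp
    | add x y _ _ hx hy => simp [hx, hy]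
    | smul a x _ hx => simp [hx]
  have := congrFun (key 1 h1) 0
  simp [v] at this

/-- aux rep -/
def auxOp (F : Matrix (Fin n) (Fin n) L) (q : L) (j : Fin n) :
    Module.End L ((Fin n → FreeAlgebra L (Fin n)) × FreeAlgebra L (Fin n)) where
  toFun p := (fun i => q • (FreeAlgebra.ι L i * p.1 j) - (q * F i j) • p.2, FreeAlgebra.ι L j * p.2)
  map_add' a b := by
    ext
    · simp [mul_add]; abel
    · simp [mul_add]
  map_smul' a b := by
    ext
    · simp [smul_sub, smul_comm a]
    · simp

lemma exists_eta (F : Matrix (Fin n) (Fin n) L) (c : Fin n → L) (q : L) :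
    ∃ η : Fin n → (FreeAlgebra L (Fin n) →ₗ[L] FreeAlgebra L (Fin n)),
      (∀ i, η i 1 = algebraMap L _ (c i)) ∧
      ∀ i j w, η i (FreeAlgebra.ι L j * w) =
        q • (FreeAlgebra.ι L i * η j w) - (q * F i j) • w := by
  let ρ := FreeAlgebra.lift L (auxOp F q)
  let v : (Fin n → FreeAlgebra L (Fin n)) × FreeAlgebra L (Fin n) :=
    (fun i => algebraMap L _ (c i), 1)
  have hρ : ∀ j p, ρ (FreeAlgebra.ι L j) p = auxOp F q j p := by intro j p; simp [ρ]
  have h2 : ∀ w p, (ρ w p).2 = w * p.2 := by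
    intro w
    induction w using FreeAlgebra.induction with
    | grade0 r => intro p; simp [Algebra.smul_def]
    | grade1 x => intro p; rw [hρ]; rfl
    | mul a b ha hb => intro p; simp [ha, hb, mul_assoc]
    | add a b ha hb => intro p; simp [ha, hb, add_mul]
  refine ⟨fun i => LinearMap.proj i ∘ₗ LinearMap.fst L _ _ ∘ₗ
    (LinearMap.applyₗ v) ∘ₗ ρ.toLinearMap, ?_, ?_⟩
  · intro i; simp [v]
  · intro i j w
    simp only [LinearMap.comp_apply, AlgHom.toLinearMap_apply, map_mul, LinearMap.applyₗ_apply_apply,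
      Module.End.mul_apply, hρ, LinearMap.fst_apply, LinearMap.proj_apply]
    simp only [auxOp, LinearMap.coe_mk, AddHom.coe_mk, h2, v, mul_one]

lemma sum_GF {M : Type} [AddCommGroup M] [Module L M] {F G : Matrix (Fin n) (Fin n) L}
    (h : G * F = 1) (l : Fin n) (f : Fin n → M) : ∑ i, ∑ j, (G i j * F j l) • f i = f l := by
  simp only [← Finset.sum_smul, ← Matrix.mul_apply, h, Matrix.one_apply]
  simp

lemma sum_FG {M : Type} [AddCommGroup M] [Module L M] {F G : Matrix (Fin n) (Fin n) L}
    (h : F * G = 1) (l : Fin n) (f : Fin n → M) : ∑ i, ∑ j, (F l i * G i j) • f j = f l := by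
  rw [Finset.sum_comm]
  simp only [← Finset.sum_smul, ← Matrix.mul_apply, h, Matrix.one_apply]
  simp

section facts
variable {F G : Matrix (Fin n) (Fin n) L} {c : Fin n → L} {q : L}
  {η : Fin n → (FreeAlgebra L (Fin n) →ₗ[L] FreeAlgebra L (Fin n))}

lemma K_smul {a : L} {x} (hx : x ∈ KId G c q) : a • x ∈ KId G c q :=
  Submodule.smul_of_tower_mem _ a hx

lemma K_r (b) : rEl G * b ∈ KId G c q := Submodule.subset_span (Or.inl ⟨b, rfl⟩)
lemma K_c : cEl G c + algebraMap L _ q ∈ KId G c q := Submodule.subset_span (Or.inr rfl)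

lemma fact1 (hGF : G * F = 1)
    (h0 : ∀ i, η i 1 = algebraMap L _ (c i))
    (hs : ∀ i j w, η i (FreeAlgebra.ι L j * w) =
        q • (FreeAlgebra.ι L i * η j w) - (q * F i j) • w) (w) :
    ∑ i, ∑ j, G i j • (FreeAlgebra.ι L i * η j w) + q • w ∈ KId G c q := by
  let Φ : FreeAlgebra L (Fin n) →ₗ[L] FreeAlgebra L (Fin n) :=
    ∑ i, ∑ j, G i j • (LinearMap.mulLeft L (FreeAlgebra.ι L i) ∘ₗ η j) + q • LinearMap.id
  have hΦ : ∀ w, Φ w = ∑ i, ∑ j, G i j • (FreeAlgebra.ι L i * η j w) + q • w := by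
    intro w; simp [Φ, LinearMap.sum_apply]
  rw [← hΦ]
  refine left_cases (((KId G c q).restrictScalars L).comap Φ) ?_ ?_ w
  · rw [Submodule.mem_comap, hΦ]
    have : ∑ i, ∑ j, G i j • (FreeAlgebra.ι L i * η j 1) + q • 1 =
        cEl G c + algebraMap L (FreeAlgebra L (Fin n)) q := by
      simp only [h0, cEl, Algebra.algebraMap_eq_smul_one, mul_smul_comm, mul_one]
    rw [this]; exact K_c
  · intro l w
    rw [Submodule.mem_comap, hΦ]
    have : ∑ i, ∑ j, G i j • (FreeAlgebra.ι L i * η j (FreeAlgebra.ι L l * w)) +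
        q • (FreeAlgebra.ι L l * w) = q • (rEl G * η l w) := by
      simp only [hs, mul_sub, smul_sub, Finset.sum_sub_distrib, rEl, Finset.sum_mul,
        Finset.smul_sum]
      have h3 := sum_GF hGF l (fun i => q • (FreeAlgebra.ι L i * w))
      have h4 : ∀ i j, G i j • (FreeAlgebra.ι L i * (q * F j l) • w) =
        (G i j * F j l) • q • (FreeAlgebra.ι L i * w) := by
        intro i j; rw [mul_smul_comm, smul_smul, smul_smul]; congr 1; ring
      simp only [h4]
      rw [h3, sub_add_cancel]
      refine Finset.sum_congr rfl fun i _ => Finset.sum_congr rfl fun j _ => ?_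
      rw [mul_smul_comm, smul_mul_assoc, smul_comm, mul_assoc]
    rw [this]
    exact K_smul (K_r _)

lemma fact2 (hGF : G * F = 1)
    (h0 : ∀ i, η i 1 = algebraMap L _ (c i))
    (hs : ∀ i j w, η i (FreeAlgebra.ι L j * w) =
        q • (FreeAlgebra.ι L i * η j w) - (q * F i j) • w)
    (ht : q ^ 2 + (∑ i, ∑ j, G i j * F i j) * q + 1 = 0) (w) :
    ∑ i, ∑ j, G i j • η i (FreeAlgebra.ι L j * w) - w ∈ KId G c q := by
  have : ∑ i, ∑ j, G i j • η i (FreeAlgebra.ι L j * w) - w =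
      q • (∑ i, ∑ j, G i j • (FreeAlgebra.ι L i * η j w) + q • w) := by
    have h1 : ∑ i, ∑ j, (G i j * (q * F i j)) • w = (-(q ^ 2) - 1) • w := by
      simp only [← Finset.sum_smul]
      congr 1
      have : ∑ i, ∑ j, G i j * (q * F i j) = (∑ i, ∑ j, G i j * F i j) * q := by
        simp only [Finset.sum_mul]
        refine Finset.sum_congr rfl fun i _ => Finset.sum_congr rfl fun j _ => ?_
        ring
      rw [this]; linear_combination ht
    simp only [hs, smul_sub, Finset.sum_sub_distrib, smul_smul, h1, smul_add, Finset.smul_sum]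
    have h2 : ∀ i j, G i j * q = q * G i j := fun i j => mul_comm _ _
    simp only [h2]
    module
  rw [this]
  exact K_smul (fact1 hGF h0 hs w)

lemma fact3 (hGF : G * F = 1)
    (h0 : ∀ i, η i 1 = algebraMap L _ (c i))
    (hs : ∀ i j w, η i (FreeAlgebra.ι L j * w) =
        q • (FreeAlgebra.ι L i * η j w) - (q * F i j) • w)
    (ht : q ^ 2 + (∑ i, ∑ j, G i j * F i j) * q + 1 = 0)
    (hc : ∑ i, ∑ j, G i j * (c i * c j) = 0) (w) :
    ∑ i, ∑ j, G i j • η i (η j w) ∈ KId G c q := by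
  let Φ : FreeAlgebra L (Fin n) →ₗ[L] FreeAlgebra L (Fin n) :=
    ∑ i, ∑ j, G i j • (η i ∘ₗ η j)
  have hΦ : ∀ w, Φ w = ∑ i, ∑ j, G i j • η i (η j w) := by
    intro w; simp [Φ, LinearMap.sum_apply]
  rw [← hΦ]
  refine left_cases (((KId G c q).restrictScalars L).comap Φ) ?_ ?_ w
  · rw [Submodule.mem_comap, hΦ]
    have : ∑ i, ∑ j, G i j • η i (η j 1) =
        (∑ i, ∑ j, G i j * (c i * c j)) • (1 : FreeAlgebra L (Fin n)) := by
      simp only [h0, Algebra.algebraMap_eq_smul_one, map_smul, smul_smul, Finset.sum_smul]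
      refine Finset.sum_congr rfl fun i _ => Finset.sum_congr rfl fun j _ => ?_
      congr 1; ring
    rw [this, hc, zero_smul]; exact Submodule.zero_mem _
  · intro l w
    rw [Submodule.mem_comap, hΦ]
    have : ∑ i, ∑ j, G i j • η i (η j (FreeAlgebra.ι L l * w)) =
        q • (∑ i, ∑ j, G i j • η i (FreeAlgebra.ι L j * η l w) - η l w) := by
      have h3 := sum_GF hGF l (fun i => q • η i w)
      rw [smul_sub, ← h3]
      simp only [hs _ _ w, map_sub, map_smul, smul_sub, Finset.sum_sub_distrib, Finset.smul_sum]
      congr 1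
      · refine Finset.sum_congr rfl fun i _ => Finset.sum_congr rfl fun j _ => ?_
        rw [smul_comm]
      · refine Finset.sum_congr rfl fun i _ => Finset.sum_congr rfl fun j _ => ?_
        rw [smul_smul, smul_smul]; congr 1; ring
    rw [this]
    exact K_smul (fact2 hGF h0 hs ht _)

lemma fact4 (hGF : G * F = 1) (hFG : F * G = 1)
    (h0 : ∀ i, η i 1 = algebraMap L _ (c i))
    (hs : ∀ i j w, η i (FreeAlgebra.ι L j * w) =
        q • (FreeAlgebra.ι L i * η j w) - (q * F i j) • w)
    (ht : q ^ 2 + (∑ i, ∑ j, G i j * F i j) * q + 1 = 0)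
    (hc : ∑ i, ∑ j, G i j * (c i * c j) = 0) {κ} (hκ : κ ∈ KId G c q) :
    ∀ l, η l κ ∈ KId G c q := by
  induction hκ using Submodule.span_induction with
  | zero => intro l; rw [map_zero]; exact Submodule.zero_mem _
  | add x y _ _ hx hy => intro l; rw [map_add]; exact Submodule.add_mem _ (hx l) (hy l)
  | smul a x hx hx' =>
    have : ∀ a : FreeAlgebra L (Fin n), ∀ x ∈ KId G c q, (∀ l, η l x ∈ KId G c q) →
        ∀ l, η l (a * x) ∈ KId G c q := by
      intro a
      induction a using FreeAlgebra.induction with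
      | grade0 r =>
        intro x hx hx' l
        rw [← Algebra.smul_def, map_smul]; exact K_smul (hx' l)
      | grade1 j =>
        intro x hx hx' l
        rw [hs]
        exact Submodule.sub_mem _ (K_smul (Submodule.smul_mem _ _ (hx' j))) (K_smul hx)
      | mul a b ha hb =>
        intro x hx hx' l
        rw [mul_assoc]
        exact ha _ (Submodule.smul_mem _ _ hx) (hb _ hx hx') l
      | add a b ha hb =>
        intro x hx hx' l
        rw [add_mul, map_add]; exact Submodule.add_mem _ (ha _ hx hx' l) (hb _ hx hx' l)
    exact this a x hx hx'
  | mem x hx =>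
    intro l
    rcases hx with ⟨b, rfl⟩ | hx
    · have : η l (rEl G * b) = q • (FreeAlgebra.ι L l *
          (∑ i, ∑ j, G i j • η i (FreeAlgebra.ι L j * b) - b)) := by
        have h3 := sum_FG hFG l (fun i => q • (FreeAlgebra.ι L i * b))
        rw [mul_sub, smul_sub, ← h3]
        simp only [rEl, Finset.sum_mul, smul_mul_assoc, map_sum, map_smul, mul_assoc, hs l,
          smul_sub, Finset.sum_sub_distrib, Finset.mul_sum, Finset.smul_sum, mul_smul_comm]
        congr 1
        · refine Finset.sum_congr rfl fun i _ => Finset.sum_congr rfl fun j _ => ?_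
          rw [smul_comm]
        · refine Finset.sum_congr rfl fun i _ => Finset.sum_congr rfl fun j _ => ?_
          rw [smul_smul, smul_smul]; congr 1; ring
      change η l (rEl G * b) ∈ _
      rw [this]
      exact K_smul (Submodule.smul_mem _ (FreeAlgebra.ι L l) (fact2 hGF h0 hs ht b))
    · rw [Set.mem_singleton_iff.mp hx]
      have : η l (cEl G c + algebraMap L _ q) =
          (∑ i, ∑ j, G i j * (c i * c j)) • q • FreeAlgebra.ι L l := by
        have h3 := sum_FG hFG l (fun i => (q * c i) • (1 : FreeAlgebra L (Fin n)))
        have h4 : ∀ i, η l (FreeAlgebra.ι L i) = (q * c i) • FreeAlgebra.ι L l - (q * F l i) • 1 := by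
          intro i
          have := hs l i 1
          rw [mul_one] at this
          rw [this, h0, Algebra.algebraMap_eq_smul_one, mul_smul_comm, mul_one, smul_smul]
        rw [Algebra.algebraMap_eq_smul_one, map_add, map_smul, h0, Algebra.algebraMap_eq_smul_one,
          smul_smul, ← h3]
        simp only [cEl, map_sum, map_smul, h4, Finset.sum_smul, ← Finset.sum_add_distrib]
        refine Finset.sum_congr rfl fun i _ => Finset.sum_congr rfl fun j _ => ?_
        module
      rw [this, hc, zero_smul]; exact Submodule.zero_mem _

end facts

lemma exists_ops [IsAlgClosed L] (hn : 2 ≤ n) {F G : Matrix (Fin n) (Fin n) L} {q : L}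
    (hq : q ≠ 0) (hGF : G * F = 1) (hFG : F * G = 1)
    (ht : q ^ 2 + (∑ i, ∑ j, G i j * F i j) * q + 1 = 0) :
    ∃ (M : Type) (_ : AddCommGroup M) (_ : Module L M) (_ : Nontrivial M)
      (x y : Fin n → Module.End L M),
      (∀ i j, x i * y j - q⁻¹ • (y i * x j) = F i j • 1) ∧
      (∑ i, ∑ j, G i j • (x i * x j) = 0) ∧
      (∑ i, ∑ j, G i j • (x i * y j) = (-q) • 1) ∧
      (∑ i, ∑ j, G i j • (y i * x j) = 1) ∧
      (∑ i, ∑ j, G i j • (y i * y j) = 0) := by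
  have hdet : IsUnit G.det := by
    have := congrArg Matrix.det hGF
    rw [Matrix.det_mul, Matrix.det_one] at this
    exact IsUnit.of_mul_eq_one _ this
  obtain ⟨c, e, hc, he⟩ := exists_isotropic hn G hdet
  obtain ⟨η, h0, hs⟩ := exists_eta F c q
  have hc' : ∑ i, ∑ j, G i j * (c i * c j) = 0 := by
    rw [← hc]
    simp only [dotProduct, Matrix.mulVec, Finset.mul_sum]
    refine Finset.sum_congr rfl fun i _ => Finset.sum_congr rfl fun j _ => ?_
    ring
  let K := (KId G c q).restrictScalars L
  let M := FreeAlgebra L (Fin n) ⧸ K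
  have hKx : ∀ i, K ≤ K.comap (LinearMap.mulLeft L (FreeAlgebra.ι L i)) := fun i κ hκ =>
    Submodule.smul_mem (KId G c q) _ hκ
  have hKy : ∀ i, K ≤ K.comap (η i) := fun i κ hκ => fact4 hGF hFG h0 hs ht hc' hκ i
  let x : Fin n → Module.End L M := fun i => K.mapQ K _ (hKx i)
  let y : Fin n → Module.End L M := fun i => K.mapQ K _ (hKy i)
  have hx : ∀ i w, x i (K.mkQ w) = K.mkQ (FreeAlgebra.ι L i * w) := fun i w => rfl
  have hy : ∀ i w, y i (K.mkQ w) = K.mkQ (η i w) := fun i w => rfl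
  have hnt : Nontrivial M := by
    refine Submodule.Quotient.nontrivial_iff.mpr ?_
    intro h
    apply one_notMem_KId G c e q hc he
    have : (1 : FreeAlgebra L (Fin n)) ∈ K := h ▸ Submodule.mem_top
    exact this
  have hz : ∀ w, w ∈ KId G c q → K.mkQ w = 0 := fun w hw =>
    (Submodule.Quotient.mk_eq_zero K).mpr hw
  clear_value x y
  refine ⟨M, inferInstance, inferInstance, hnt, x, y, ?_, ?_, ?_, ?_, ?_⟩
  · intro i j
    apply Submodule.linearMap_qext
    ext w
    simp only [LinearMap.comp_apply, LinearMap.sub_apply, LinearMap.smul_apply,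
      Module.End.mul_apply, Module.End.one_apply, hx, hy, hs]
    rw [← map_smul, ← map_sub, ← map_smul]
    congr 1
    rw [smul_sub, smul_smul, smul_smul, inv_mul_cancel_left₀ hq, inv_mul_cancel₀ hq]
    simp
  · apply Submodule.linearMap_qext
    ext w
    simp only [LinearMap.comp_apply, LinearMap.sum_apply, LinearMap.smul_apply,
      Module.End.mul_apply, hx, hy, LinearMap.zero_apply]
    simp only [← map_smul, ← map_sum]
    apply hz
    convert K_r (G := G) (c := c) (q := q) w using 1
    simp [rEl, Finset.sum_mul, mul_assoc]
  · apply Submodule.linearMap_qext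
    ext w
    simp only [LinearMap.comp_apply, LinearMap.sum_apply, LinearMap.smul_apply,
      Module.End.mul_apply, hx, hy, Module.End.one_apply]
    rw [neg_smul, ← add_eq_zero_iff_eq_neg]
    simp only [← map_smul, ← map_sum, ← map_add]
    exact hz _ (fact1 hGF h0 hs w)
  · apply Submodule.linearMap_qext
    ext w
    simp only [LinearMap.comp_apply, LinearMap.sum_apply, LinearMap.smul_apply,
      Module.End.mul_apply, hx, hy, Module.End.one_apply]
    rw [← sub_eq_zero]
    simp only [← map_smul K.mkQ, ← map_sum K.mkQ, ← map_sub K.mkQ]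
    exact hz _ (fact2 hGF h0 hs ht w)
  · apply Submodule.linearMap_qext
    ext w
    simp only [LinearMap.comp_apply, LinearMap.sum_apply, LinearMap.smul_apply,
      Module.End.mul_apply, hx, hy, LinearMap.zero_apply]
    simp only [← map_smul K.mkQ, ← map_sum K.mkQ]
    exact hz _ (fact3 hGF h0 hs ht hc' w)

end ops
end nonzero

lemma BB_hom_of_ops {n : ℕ} (q : k) (hq : q ≠ 0)
    (F : Matrix (Fin n) (Fin n) k) (hF : IsUnit F.det)
    {A : Type} [Ring A] [Algebra k A] (x y : Fin n → A)
    (r0 : ∀ i j, x i * y j - q⁻¹ • (y i * x j) = F i j • 1)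
    (r1 : ∑ i, ∑ j, F⁻¹ i j • (x i * x j) = 0)
    (r2 : ∑ i, ∑ j, F⁻¹ i j • (x i * y j) = (-q) • 1)
    (r3 : ∑ i, ∑ j, F⁻¹ i j • (y i * x j) = 1)
    (r4 : ∑ i, ∑ j, F⁻¹ i j • (y i * y j) = 0) :
    Nonempty (BB k (Eqm k q) F →ₐ[k] A) := by
  have hal : ∀ a : k, (algebraMap k A a) = a • (1 : A) := Algebra.algebraMap_eq_smul_one
  let X : Matrix (Fin 2) (Fin n) A := Matrix.of ![x, y]
  have hX0 : ∀ i, X 0 i = x i := fun i => rfl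
  have hX1 : ∀ i, X 1 i = y i := fun i => rfl
  clear_value X
  have h1 : liftMat k (A := A) F⁻¹ * Xᵀ * liftMat k (A := A) (Eqm k q) * X = 1 := by
    have hm : Xᵀ * liftMat k (A := A) (Eqm k q) * X = liftMat k (A := A) F := by
      ext1 i j
      have h := r0 i j
      rw [Matrix.mul_apply, Fin.sum_univ_two]
      simp only [Matrix.mul_apply, Fin.sum_univ_two, Matrix.transpose_apply, hX0, hX1]
      simp only [liftMat, Matrix.map_apply, hal]
      rw [← h]
      simp [Eqm, sub_eq_add_neg, add_comm]
    rw [Matrix.mul_assoc, Matrix.mul_assoc, ← Matrix.mul_assoc Xᵀ, hm, lift_invF hF]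
  have h2 : X * liftMat k (A := A) F⁻¹ * Xᵀ * liftMat k (A := A) (Eqm k q) = 1 := by
    have hW : ∀ a b, (X * liftMat k (A := A) F⁻¹ * Xᵀ) a b =
        ∑ i, ∑ j, F⁻¹ i j • (X a i * X b j) := by
      intro a b
      simp only [Matrix.mul_apply, Finset.sum_mul]
      rw [Finset.sum_comm]
      refine Finset.sum_congr rfl fun i _ => Finset.sum_congr rfl fun j _ => ?_
      simp only [liftMat, Matrix.map_apply, hal, mul_smul_comm, smul_mul_assoc, mul_one,
        Matrix.transpose_apply]
    ext1 a b
    rw [Matrix.mul_apply, Fin.sum_univ_two, hW, hW]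
    fin_cases a <;> fin_cases b <;>
      simp [hX0, hX1, r1, r2, r3, r4, liftMat, Eqm, hal, smul_smul, hq]
  obtain ⟨f, -⟩ := BB_lift X h1 h2
  exact ⟨f⟩

lemma BB_ne_zero {n : ℕ} (hn : 2 ≤ n) (q : k) (hq : q ≠ 0)
    (F : Matrix (Fin n) (Fin n) k) (hF : IsUnit F.det)
    (htr : q ^ 2 + (F * F⁻¹ᵀ).trace * q + 1 = 0) :
    (1 : BB k (Eqm k q) F) ≠ 0 := by
  let φ := algebraMap k (AlgebraicClosure k)
  have hq' : φ q ≠ 0 := by simpa [φ] using hq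
  have hGF : (F⁻¹).map φ * F.map φ = 1 := by
    rw [← Matrix.map_mul, Matrix.nonsing_inv_mul _ hF, Matrix.map_one _ (map_zero _) (map_one _)]
  have hFG : F.map φ * (F⁻¹).map φ = 1 := by
    rw [← Matrix.map_mul, Matrix.mul_nonsing_inv _ hF, Matrix.map_one _ (map_zero _) (map_one _)]
  have ht : (φ q) ^ 2 + (∑ i, ∑ j, (F⁻¹).map φ i j * F.map φ i j) * φ q + 1 = 0 := by
    have h := congrArg φ htr
    simp only [map_add, map_mul, map_pow, map_one, map_zero] at h
    rw [← h]
    congr 3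
    simp only [Matrix.trace, Matrix.diag_apply, Matrix.mul_apply, map_sum, map_mul,
      Matrix.transpose_apply, Matrix.map_apply]
    refine Finset.sum_congr rfl fun i _ => Finset.sum_congr rfl fun j _ => mul_comm _ _
  obtain ⟨M, _, _, _, x, y, r0, r1, r2, r3, r4⟩ := exists_ops hn hq' hGF hFG ht
  letI : Module k M := Module.compHom M φ
  haveI : IsScalarTower k (AlgebraicClosure k) M :=
    ⟨fun a b m => by rw [Algebra.smul_def, mul_smul]; rfl⟩
  have hal : ∀ (a : k) (u : Module.End (AlgebraicClosure k) M), a • u = φ a • u := by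
    intro a u
    ext m
    exact algebraMap_smul (AlgebraicClosure k) a (u m) |>.symm
  obtain ⟨f⟩ := BB_hom_of_ops k q hq F hF x y
    (by intro i j; rw [hal, hal, map_inv₀]; exact r0 i j)
    (by simp only [hal]; exact r1)
    (by simp only [hal, map_neg]; exact r2)
    (by simp only [hal]; exact r3)
    (by simp only [hal]; exact r4)
  intro h
  have := congrArg f h
  rw [map_one, map_zero] at this
  exact one_ne_zero this

/-- **Statement 15.** If `q ∈ k*` satisfies `q² + tr(F·ᵀF⁻¹)·q + 1 = 0`, then
`B(E_q,F)` is a `B(E_q)`-`B(F)`-bigalois extension: it is non-zero, the left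
coaction `α` exists, is unique and has bijective Galois map `κₗ`, and the right
coaction `β` exists, is unique and has bijective Galois map `κᵣ`. -/
theorem BB_Eq_bigalois {n : ℕ} (hn : 2 ≤ n) (q : k) (hq : q ≠ 0)
    (F : Matrix (Fin n) (Fin n) k) (hF : IsUnit F.det)
    (htr : q ^ 2 + (F * F⁻¹ᵀ).trace * q + 1 = 0) :
    (1 : BB k (Eqm k q) F) ≠ 0 ∧
    (∃! α : BB k (Eqm k q) F →ₐ[k] (BB k (Eqm k q) (Eqm k q) ⊗[k] BB k (Eqm k q) F),
      ∀ i j, α (ZMat k (Eqm k q) F i j) =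
        ∑ l, ZMat k (Eqm k q) (Eqm k q) i l ⊗ₜ[k] ZMat k (Eqm k q) F l j) ∧
    (∀ α : BB k (Eqm k q) F →ₐ[k] (BB k (Eqm k q) (Eqm k q) ⊗[k] BB k (Eqm k q) F),
      (∀ i j, α (ZMat k (Eqm k q) F i j) =
        ∑ l, ZMat k (Eqm k q) (Eqm k q) i l ⊗ₜ[k] ZMat k (Eqm k q) F l j) →
      Function.Bijective
        ((LinearMap.lTensor (BB k (Eqm k q) (Eqm k q)) (LinearMap.mul' k (BB k (Eqm k q) F))) ∘ₗ
          (TensorProduct.assoc k (BB k (Eqm k q) (Eqm k q)) (BB k (Eqm k q) F)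
            (BB k (Eqm k q) F)).toLinearMap ∘ₗ
          (LinearMap.rTensor (BB k (Eqm k q) F) α.toLinearMap) :
          (BB k (Eqm k q) F ⊗[k] BB k (Eqm k q) F) →ₗ[k]
            (BB k (Eqm k q) (Eqm k q) ⊗[k] BB k (Eqm k q) F))) ∧
    (∃! β : BB k (Eqm k q) F →ₐ[k] (BB k (Eqm k q) F ⊗[k] BB k F F),
      ∀ i j, β (ZMat k (Eqm k q) F i j) =
        ∑ l, ZMat k (Eqm k q) F i l ⊗ₜ[k] ZMat k F F l j) ∧
    (∀ β : BB k (Eqm k q) F →ₐ[k] (BB k (Eqm k q) F ⊗[k] BB k F F),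
      (∀ i j, β (ZMat k (Eqm k q) F i j) =
        ∑ l, ZMat k (Eqm k q) F i l ⊗ₜ[k] ZMat k F F l j) →
      Function.Bijective
        ((LinearMap.rTensor (BB k F F) (LinearMap.mul' k (BB k (Eqm k q) F))) ∘ₗ
          (TensorProduct.assoc k (BB k (Eqm k q) F) (BB k (Eqm k q) F)
            (BB k F F)).symm.toLinearMap ∘ₗ
          (LinearMap.lTensor (BB k (Eqm k q) F) β.toLinearMap) :
          (BB k (Eqm k q) F ⊗[k] BB k (Eqm k q) F) →ₗ[k]
            (BB k (Eqm k q) F ⊗[k] BB k F F))) := by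

  have hE : IsUnit (Eqm k q).det := by
    simp [Eqm, Matrix.det_fin_two, hq]
  refine ⟨BB_ne_zero k hn q hq F hF htr, ?_, ?_, ?_, ?_⟩
  · obtain ⟨f, hf⟩ := exists_conv hE hE hF (AlgHom.id k (BB k (Eqm k q) (Eqm k q)))
      (AlgHom.id k (BB k (Eqm k q) F))
    refine ⟨f, hf, fun g hg => ?_⟩
    apply BB_ext g f; intro i j
    rw [hg, hf]; rfl
  · intro α hα
    obtain ⟨S, hS⟩ := exists_anti hE hF
    obtain ⟨γ, hγ⟩ := exists_conv hE hF hE (AlgHom.id k (BB k (Eqm k q) F)) S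
    refine galois_left_abs (ZMat k (Eqm k q) (Eqm k q)) (ZMat k (Eqm k q) F) (VMat (Eqm k q) F)
      BB_induction BB_induction V_Z_apply Z_V_apply α hα γ ?_
    intro i j; rw [hγ]; simp only [hS]; rfl
  · obtain ⟨f, hf⟩ := exists_conv hE hF hF (AlgHom.id k (BB k (Eqm k q) F))
      (AlgHom.id k (BB k F F))
    refine ⟨f, hf, fun g hg => ?_⟩
    apply BB_ext g f; intro i j
    rw [hg, hf]; rfl
  · intro β hβ
    obtain ⟨S, hS⟩ := exists_anti hE hF
    obtain ⟨γ, hγ⟩ := exists_conv hF hE hF S (AlgHom.id k (BB k (Eqm k q) F))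
    refine galois_right_abs (ZMat k F F) (ZMat k (Eqm k q) F) (VMat (Eqm k q) F)
      BB_induction BB_induction V_Z_apply Z_V_apply β hβ γ ?_
    intro i j; rw [hγ]; simp only [hS]; rfl
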